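/- arXiv:math/0602343 — 2 statements merged into one kernel-verified Lean document; each statement's English description precedes it below -/
import Mathlib

section
/- Let f be an analytic self-map of ℂ⁺ and let a < b be real numbers such that for Lebesgue-almost every x ∈ (a,b) the limit lim_{y↓0} f(x+iy) exists and is real. Suppose x₀ ∈ (a,b) is a point through which f cannot be continued meromorphically, i.e. there is no open neighborhood U of x₀ in ℂ and meromorphic function g on U with g = f on U ∩ ℂ⁺. Then for any real numbers c < d there exists a set E ⊆ (a,b) of strictly positive Lebesgue measure such that lim_{y↓0} f(x+iy) exists for every x ∈ E and the set {lim_{y↓0} f(x+iy) : x ∈ E} is dense in the interval (c,d). -/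
open Complex Filter Set Topology MeasureTheory

/-- The open upper half-plane `ℂ⁺ = {z : ℂ | Im z > 0}`. -/
def UHP : Set ℂ := {z : ℂ | 0 < z.im}

lemma isOpen_UHP' : IsOpen UHP := isOpen_lt continuous_const Complex.continuous_im

lemma exists_primitive_UHP (H : ℂ → ℂ) (hH : DifferentiableOn ℂ H UHP) :
    ∃ P : ℂ → ℂ, ∀ z ∈ UHP, HasDerivAt P (H z) z := by
  set C : ℂ → ℂ := fun ζ => I * (1 + ζ) / (1 - ζ) with hC
  have h1 : ∀ ζ ∈ Metric.ball (0:ℂ) 1, 1 - ζ ≠ 0 := by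
    intro ζ hζ h
    have : ζ = 1 := by linear_combination -h
    simp [this] at hζ
  have hCm : MapsTo C (Metric.ball (0:ℂ) 1) UHP := by
    intro ζ hζ
    have h := h1 ζ hζ
    have hn : 0 < Complex.normSq (1 - ζ) := Complex.normSq_pos.2 h
    have hz : Complex.normSq ζ < 1 := by
      rw [Complex.normSq_eq_norm_sq]
      have : ‖ζ‖ < 1 := by simpa using hζ
      nlinarith [norm_nonneg ζ]
    show 0 < (C ζ).im
    have : (C ζ).im = (1 - Complex.normSq ζ) / Complex.normSq (1 - ζ) := by
      simp only [hC, Complex.div_im, Complex.normSq_apply]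
      simp
      field_simp
      ring
    rw [this]
    exact div_pos (by linarith) hn
  have hd : DifferentiableOn ℂ (fun ζ => H (C ζ) * (2 * I / (1 - ζ) ^ 2)) (Metric.ball (0:ℂ) 1) := by
    apply DifferentiableOn.mul
    · apply hH.comp _ hCm
      intro ζ hζ
      have := h1 ζ hζ
      apply DifferentiableAt.differentiableWithinAt
      simp only [hC]
      fun_prop (disch := assumption)
    · intro ζ hζ
      have := h1 ζ hζ
      apply DifferentiableAt.differentiableWithinAt
      have h2 : (1 - ζ)^2 ≠ 0 := pow_ne_zero _ this
      fun_prop (disch := assumption)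
  obtain ⟨Q, hQ⟩ := hd.isExactOn_ball
  refine ⟨fun z => Q ((z - I) / (z + I)), fun z hz => ?_⟩
  have hz' : 0 < z.im := hz
  have hzI : z + I ≠ 0 := by
    intro h
    have := congrArg Complex.im h
    simp at this
    linarith
  have hb : (z - I) / (z + I) ∈ Metric.ball (0:ℂ) 1 := by
    rw [mem_ball_zero_iff, norm_div, div_lt_one (norm_pos_iff.2 hzI)]
    rw [← sq_lt_sq₀ (norm_nonneg _) (norm_nonneg _), ← Complex.normSq_eq_norm_sq,
      ← Complex.normSq_eq_norm_sq, Complex.normSq_apply, Complex.normSq_apply]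
    simp
    nlinarith
  have h3 := hQ _ hb
  have h4 : HasDerivAt (fun z : ℂ => (z - I) / (z + I)) (2 * I / (z + I)^2) z := by
    have := ((hasDerivAt_id z).sub_const I).div ((hasDerivAt_id z).add_const I) hzI
    have e : (1 * (id z + I) - (id z - I) * 1) / (id z + I) ^ 2 = 2 * I / (z + I)^2 := by
      simp only [id]
      congr 1; ring
    rw [e] at this
    exact this
  have h5 := h3.comp z h4
  have h6 : 1 - (z - I) / (z + I) = 2 * I / (z + I) := by field_simp; ring
  have h7 : C ((z - I) / (z + I)) = z := by
    simp only [hC, h6]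
    field_simp
    ring
  have e : (fun ζ => H (C ζ) * (2 * I / (1 - ζ) ^ 2)) ((z - I) / (z + I)) * (2 * I / (z + I) ^ 2)
      = H z := by
    simp only [h7, h6]
    field_simp
  rw [e] at h5
  exact h5


/-- Morera-type gluing along the real axis. -/
lemma glue_real (Q : ℂ → ℂ) (c : ℂ) (r : ℝ) (hc : ContinuousOn Q (Metric.ball c r))
    (hd : ∀ z ∈ Metric.ball c r, z.im ≠ 0 → DifferentiableAt ℂ Q z) :
    DifferentiableOn ℂ Q (Metric.ball c r) := by
  rw [← Complex.isConservativeOn_and_continuousOn_iff_isDifferentiableOn Metric.isOpen_ball]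
  refine ⟨?_, hc⟩
  intro z w hzw
  rw [← add_eq_zero_iff_eq_neg, Complex.wedgeIntegral_add_wedgeIntegral_eq]
  -- rectangles whose open part avoids the axis
  have key : ∀ s t : ℝ, uIcc s t ⊆ uIcc z.im w.im → (0:ℝ) ∉ Ioo (min s t) (max s t) →
      (∫ x : ℝ in z.re..w.re, Q (x + s * I)) - (∫ x : ℝ in z.re..w.re, Q (x + t * I)) +
      I • (∫ y : ℝ in s..t, Q (w.re + y * I)) -
      I • (∫ y : ℝ in s..t, Q (z.re + y * I)) = 0 := by
    intro s t hst h0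
    have := Complex.integral_boundary_rect_eq_zero_of_continuousOn_of_differentiableOn Q
      (z.re + s * I) (w.re + t * I) ?_ ?_
    · simpa using this
    · refine hc.mono (Subset.trans ?_ hzw)
      intro u hu
      simp [mem_reProdIm, Rectangle] at hu ⊢
      exact ⟨hu.1, hst hu.2⟩
    · intro u hu
      simp [mem_reProdIm] at hu
      apply DifferentiableAt.differentiableWithinAt
      apply hd
      · apply hzw
        simp only [mem_reProdIm, Rectangle]
        refine ⟨?_, hst ?_⟩
        · rw [uIcc, mem_Icc]
          exact ⟨by simp; rcases hu.1.1 with h | h <;> [left; right] <;> exact h.le,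
            by simp; rcases hu.1.2 with h | h <;> [left; right] <;> exact h.le⟩
        · rw [uIcc, mem_Icc]
          exact ⟨by simp; rcases hu.2.1 with h | h <;> [left; right] <;> exact h.le,
            by simp; rcases hu.2.2 with h | h <;> [left; right] <;> exact h.le⟩
      · intro h
        apply h0
        rw [← h]
        simpa using hu.2
  by_cases h0 : (0:ℝ) ∈ uIcc z.im w.im
  · have k1 := key z.im 0 (uIcc_subset_uIcc left_mem_uIcc h0) (by simp; grind)
    have k2 := key 0 w.im (uIcc_subset_uIcc h0 right_mem_uIcc) (by simp; grind)
    have hint : ∀ x ∈ uIcc z.re w.re, ∀ s t : ℝ, uIcc s t ⊆ uIcc z.im w.im →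
        IntervalIntegrable (fun y : ℝ => Q (x + y * I)) volume s t := by
      intro x hx s t hst
      apply ContinuousOn.intervalIntegrable
      apply hc.comp (by fun_prop)
      intro y hy
      apply hzw
      simp only [mem_reProdIm, Rectangle]
      simp
      exact ⟨hx, hst hy⟩
    rw [← intervalIntegral.integral_add_adjacent_intervals
        (hint w.re right_mem_uIcc z.im 0 (uIcc_subset_uIcc left_mem_uIcc h0))
        (hint w.re right_mem_uIcc 0 w.im (uIcc_subset_uIcc h0 right_mem_uIcc)),
      ← intervalIntegral.integral_add_adjacent_intervals
        (hint z.re left_mem_uIcc z.im 0 (uIcc_subset_uIcc left_mem_uIcc h0))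
        (hint z.re left_mem_uIcc 0 w.im (uIcc_subset_uIcc h0 right_mem_uIcc))]
    simp only [smul_eq_mul] at *
    linear_combination k1 + k2
  · exact key z.im w.im subset_rfl (fun h => h0 (Ioo_subset_Icc_self h))

lemma bounded_reflect (H : ℂ → ℂ) (hH : DifferentiableOn ℂ H UHP)
    (hb : ∀ z ∈ UHP, ‖H z‖ ≤ 1) (a b : ℝ)
    (hae : ∀ᵐ x ∂(volume.restrict (Set.Ioo a b)),
      Tendsto (fun y : ℝ => (H (Complex.ofReal x + y * Complex.I)).im) (𝓝[>] (0:ℝ)) (𝓝 0))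
    (x₀ : ℝ) (hx₀ : x₀ ∈ Set.Ioo a b) :
    ∃ (r : ℝ) (g : ℂ → ℂ), 0 < r ∧ DifferentiableOn ℂ g (Metric.ball (x₀ : ℂ) r) ∧
      EqOn H g (Metric.ball (x₀ : ℂ) r ∩ UHP) := by
  obtain ⟨P₀, hP₀⟩ := exists_primitive_UHP H hH
  have hconv : Convex ℝ UHP := convex_halfSpace_im_gt 0
  have hlip : LipschitzOnWith 1 P₀ UHP :=
    hconv.lipschitzOnWith_of_nnnorm_hasDerivWithin_le
      (fun z hz => (hP₀ z hz).hasDerivWithinAt) (fun z hz => hb z hz)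
  obtain ⟨P₁, hP₁, hE⟩ := hlip.extend_finite_dimension
  have hP₁c : Continuous P₁ := hP₁.continuous
  set P : ℂ → ℂ := fun z => P₁ z - P₁ x₀ with hP
  have hPc : Continuous P := by fun_prop
  have hPd : ∀ z ∈ UHP, HasDerivAt P (H z) z := by
    intro z hz
    apply HasDerivAt.sub_const
    refine (hP₀ z hz).congr_of_eventuallyEq ?_
    filter_upwards [isOpen_UHP'.mem_nhds hz] with w hw
    exact (hE hw).symm
  have hmem : ∀ (x y : ℝ), 0 < y → (x : ℂ) + y * I ∈ UHP := by
    intro x y hy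
    simpa [UHP] using hy
  -- P is real on the interval
  have hreal : ∀ x ∈ Ioo a b, (P x).im = 0 := by
    intro x hx
    have hHc : ∀ y : ℝ, 0 < y → Continuous (fun t : ℝ => H (t + y * I)) := by
      intro y hy
      exact hH.continuousOn.comp_continuous (by fun_prop) (fun t => hmem t y hy)
    have hft : ∀ y : ℝ, 0 < y →
        ∫ t in x₀..x, (H (t + y * I)).im = (P (x + y * I)).im - (P (x₀ + y * I)).im := by
      intro y hy
      apply intervalIntegral.integral_eq_sub_of_hasDerivAt
        (f := fun t : ℝ => (P (t + y * I)).im)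
      · intro t _
        have h1 := hPd _ (hmem t y hy)
        have h2 : HasDerivAt (fun w : ℂ => P (w + y * I)) (H (t + y * I)) (t : ℂ) :=
          HasDerivAt.comp_add_const (t : ℂ) (y * I) h1
        have h3 := h2.comp_ofReal
        exact (Complex.imCLM.hasFDerivAt.comp_hasDerivAt t h3)
      · exact (Complex.continuous_im.comp (hHc y hy)).intervalIntegrable _ _
    have hl1 : Tendsto (fun y : ℝ => ∫ t in x₀..x, (H (t + y * I)).im) (𝓝[>] 0)
        (𝓝 (∫ t in x₀..x, (0:ℝ))) := by
      apply intervalIntegral.tendsto_integral_filter_of_dominated_convergence (fun _ => (1:ℝ))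
      · filter_upwards [self_mem_nhdsWithin] with y hy
        exact (Complex.continuous_im.comp (hHc y hy)).aestronglyMeasurable
      · filter_upwards [self_mem_nhdsWithin] with y hy
        refine Eventually.of_forall fun t _ => ?_
        exact (Complex.abs_im_le_norm _).trans (hb _ (hmem t y hy))
      · exact intervalIntegrable_const
      · rw [ae_restrict_iff' measurableSet_Ioo] at hae
        filter_upwards [hae] with t ht hti
        apply ht
        rw [mem_uIoc] at hti
        rcases hti with h | h
        · exact ⟨hx₀.1.trans h.1, h.2.trans_lt hx.2⟩
        · exact ⟨hx.1.trans h.1, h.2.trans_lt hx₀.2⟩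
    have hl2 : Tendsto (fun y : ℝ => ∫ t in x₀..x, (H (t + y * I)).im) (𝓝[>] 0)
        (𝓝 ((P (x + (0:ℝ) * I)).im - (P (x₀ + (0:ℝ) * I)).im)) := by
      have hcont : Continuous (fun y : ℝ => (P (x + y * I)).im - (P (x₀ + y * I)).im) := by
        fun_prop
      refine ((hcont.tendsto 0).mono_left nhdsWithin_le_nhds).congr' ?_
      filter_upwards [self_mem_nhdsWithin] with y hy
      exact (hft y hy).symm
    have := tendsto_nhds_unique hl1 hl2
    simp [hP] at this
    simp [hP]
    linarith
  set Q : ℂ → ℂ := fun z => if 0 ≤ z.im then P z else (starRingEnd ℂ) (P ((starRingEnd ℂ) z)) with hQ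
  obtain ⟨r, hr, hrs⟩ : ∃ r > 0, Metric.ball x₀ r ⊆ Ioo a b := Metric.isOpen_iff.1 isOpen_Ioo _ hx₀
  have hre : ∀ z ∈ Metric.ball (x₀ : ℂ) r, z.re ∈ Ioo a b := by
    intro z hz
    apply hrs
    rw [Metric.mem_ball, Real.dist_eq]
    rw [Metric.mem_ball, dist_eq_norm] at hz
    refine lt_of_le_of_lt ?_ hz
    simpa using Complex.abs_re_le_norm (z - x₀)
  have hQc : ContinuousOn Q (Metric.ball (x₀ : ℂ) r) := by
    apply ContinuousOn.if
    · intro z hz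
      have h0 : z.im = 0 := by
        have := frontier_le_subset_eq continuous_const Complex.continuous_im hz.2
        exact this.symm
      have hz1 : z = (z.re : ℂ) := by
        apply Complex.ext <;> simp [h0]
      rw [hz1, Complex.conj_ofReal, eq_comm, Complex.conj_eq_iff_im]
      exact hreal _ (hre z hz.1)
    · exact hPc.continuousOn
    · exact (Complex.continuous_conj.comp (hPc.comp Complex.continuous_conj)).continuousOn
  have hQu : ∀ z ∈ UHP, HasDerivAt Q (H z) z := by
    intro z hz
    refine (hPd z hz).congr_of_eventuallyEq ?_
    filter_upwards [isOpen_UHP'.mem_nhds hz] with w hw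
    have : 0 ≤ w.im := le_of_lt hw
    simp [hQ, this]
  have hQd : DifferentiableOn ℂ Q (Metric.ball (x₀ : ℂ) r) := by
    apply glue_real _ _ _ hQc
    intro z _ hz0
    rcases lt_or_gt_of_ne hz0 with h | h
    · have h1 : (starRingEnd ℂ) z ∈ UHP := by simpa [UHP] using h
      have h2 : DifferentiableAt ℂ ((starRingEnd ℂ) ∘ P ∘ (starRingEnd ℂ)) z := by
        rw [differentiableAt_conj_conj_iff]
        exact (hPd _ h1).differentiableAt
      refine h2.congr_of_eventuallyEq ?_
      filter_upwards [(isOpen_lt Complex.continuous_im continuous_const).mem_nhds h] with w hw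
      have : ¬ 0 ≤ w.im := not_le.2 hw
      simp [hQ, this]
    · exact (hQu z h).differentiableAt
  refine ⟨r, deriv Q, hr, hQd.deriv Metric.isOpen_ball, ?_⟩
  intro z hz
  exact ((hQu z hz.2).deriv).symm

/-- Let `f` be an analytic self-map of `ℂ⁺` and `a < b` reals such that for a.e.
`x ∈ (a,b)` the boundary limit `lim_{y↓0} f(x+iy)` exists and is real.  If
`x₀ ∈ (a,b)` is a point through which `f` has no meromorphic continuation, then
for any `c < d` there is a set `E ⊆ (a,b)` of positive Lebesgue measure such that
the boundary limit exists at every point of `E` and the set of these limits is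
dense in `(c,d)`. -/
theorem seidel_caratheodory_halfplane
    (f : ℂ → ℂ)
    (hfd : DifferentiableOn ℂ f UHP)
    (hfm : Set.MapsTo f UHP UHP)
    (a b : ℝ) (hab : a < b)
    (hae : ∀ᵐ x ∂(volume.restrict (Set.Ioo a b)),
      ∃ L : ℝ, Tendsto (fun y : ℝ => f (Complex.ofReal x + y * Complex.I)) (𝓝[>] (0:ℝ)) (𝓝 (L : ℂ)))
    (x₀ : ℝ) (hx₀ : x₀ ∈ Set.Ioo a b)
    (hnoext : ¬ ∃ (U : Set ℂ) (g : ℂ → ℂ), IsOpen U ∧ (x₀ : ℂ) ∈ U ∧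
      MeromorphicOn g U ∧ Set.EqOn f g (U ∩ UHP))
    (c d : ℝ) (hcd : c < d) :
    ∃ (E : Set ℝ) (L : ℝ → ℝ), E ⊆ Set.Ioo a b ∧ 0 < volume E ∧
      (∀ x ∈ E, Tendsto (fun y : ℝ => f (Complex.ofReal x + y * Complex.I)) (𝓝[>] (0:ℝ)) (𝓝 (Complex.ofReal (L x)))) ∧
      (∀ t ∈ Set.Ioo c d, t ∈ closure (L '' E)) := by
  classical
  set S : Set ℝ := {x | ∃ L : ℝ, Tendsto (fun y : ℝ => f (Complex.ofReal x + y * Complex.I))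
    (𝓝[>] (0:ℝ)) (𝓝 (L : ℂ))} with hS
  set L : ℝ → ℝ := fun x => if h : x ∈ S then Classical.choose h else 0 with hL
  have hLs : ∀ x ∈ S, Tendsto (fun y : ℝ => f (Complex.ofReal x + y * Complex.I))
      (𝓝[>] (0:ℝ)) (𝓝 (Complex.ofReal (L x))) := by
    intro x hx
    simp only [hL, dif_pos hx]
    exact Classical.choose_spec hx
  refine ⟨Ioo a b ∩ S, L, inter_subset_left, ?_, fun x hx => hLs x hx.2, ?_⟩
  · have h1 : (Ioo a b ∩ S : Set ℝ) =ᵐ[volume] Ioo a b := by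
      rw [ae_restrict_iff' measurableSet_Ioo] at hae
      filter_upwards [hae] with x hx
      exact propext ⟨fun h => h.1, fun h => ⟨h, hx h⟩⟩
    rw [measure_congr h1, Real.volume_Ioo]
    simpa using hab
  intro t _
  by_contra hcl
  rw [Metric.mem_closure_iff] at hcl
  push Not at hcl
  obtain ⟨ε, hε, hfar⟩ := hcl
  apply hnoext
  -- the slit is `[p, q]`
  set p : ℝ := t - ε / 2 with hp
  set q : ℝ := t + ε / 2 with hq
  set M : ℂ → ℂ := fun w => (w - p) / (w - q) with hM
  set φ : ℂ → ℂ := fun w => ((M w) ^ (1 / 2 : ℂ) + 1)⁻¹ with hφ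
  have hre_pos : ∀ w ∈ slitPlane, 0 < (w ^ (1/2 : ℂ)).re := by
    intro w hw
    rw [Complex.cpow_def_of_ne_zero (slitPlane_ne_zero hw), Complex.exp_re]
    apply mul_pos (Real.exp_pos _)
    have e : (Complex.log w * (1 / 2 : ℂ)).im = w.arg / 2 := by
      have : (1 / 2 : ℂ) = ((1 / 2 : ℝ) : ℂ) := by simp
      rw [this, Complex.im_mul_ofReal, Complex.log_im]
      ring
    rw [e]
    have h1 := Complex.neg_pi_lt_arg w
    have h2 := Complex.arg_le_pi w
    have h3 : w.arg ≠ Real.pi := (Complex.mem_slitPlane_iff_arg.1 hw).1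
    have h4 := lt_of_le_of_ne h2 h3
    apply Real.cos_pos_of_mem_Ioo
    constructor <;> linarith
  have hMs : ∀ w ∈ UHP, w - q ≠ 0 ∧ M w ∈ slitPlane := by
    intro w hw
    have hw' : 0 < w.im := hw
    have h0 : w - q ≠ 0 := by
      intro h
      have := congrArg Complex.im h
      simp at this
      linarith
    refine ⟨h0, Or.inr ?_⟩
    have hn : 0 < Complex.normSq (w - q) := Complex.normSq_pos.2 h0
    have : (M w).im = - (w.im * ε) / Complex.normSq (w - q) := by
      simp only [hM, Complex.div_im]
      rw [← sub_div]
      congr 1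
      simp [hp, hq]
      ring
    rw [this]
    apply div_ne_zero _ hn.ne'
    have := mul_pos hw' hε
    linarith
  have hMr : ∀ x ∈ Ioo a b ∩ S, (L x : ℂ) - q ≠ 0 ∧ 0 < (L x - p) / (L x - q) := by
    intro x hx
    have h := hfar (L x) ⟨x, hx, rfl⟩
    rw [Real.dist_eq, le_abs] at h
    rcases h with h | h
    · have h1 : L x - q < 0 := by rw [hq]; linarith
      have h2 : L x - p < 0 := by rw [hp]; linarith
      exact ⟨by exact_mod_cast h1.ne, div_pos_of_neg_of_neg h2 h1⟩
    · have h1 : 0 < L x - q := by rw [hq]; linarith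
      have h2 : 0 < L x - p := by rw [hp]; linarith
      exact ⟨by exact_mod_cast h1.ne', div_pos h2 h1⟩
  have hne : ∀ w, M w ∈ slitPlane → (M w) ^ (1 / 2 : ℂ) + 1 ≠ 0 := by
    intro w hw h
    have h1 := hre_pos _ hw
    have := congrArg Complex.re h
    simp at this h1
    linarith
  have hφd : ∀ w : ℂ, w - q ≠ 0 → M w ∈ slitPlane → DifferentiableAt ℂ φ w := by
    intro w h1 h2
    have h3 := hne w h2
    have h4 : DifferentiableAt ℂ M w := by
      simp only [hM]
      fun_prop (disch := assumption)
    exact ((h4.cpow_const h2).add_const 1).inv h3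
  have hc1 : DifferentiableOn ℂ (φ ∘ f) UHP := by
    intro z hz
    obtain ⟨h1, h2⟩ := hMs _ (hfm hz)
    exact (hφd _ h1 h2).comp_differentiableWithinAt z (hfd z hz)
  have hc2 : ∀ z ∈ UHP, ‖(φ ∘ f) z‖ ≤ 1 := by
    intro z hz
    obtain ⟨h1, h2⟩ := hMs _ (hfm hz)
    have h3 := hre_pos _ h2
    simp only [Function.comp, hφ, norm_inv]
    apply inv_le_one_of_one_le₀
    refine le_trans ?_ (Complex.re_le_norm _)
    rw [Complex.add_re, Complex.one_re]
    linarith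
  have hc3 : ∀ᵐ x ∂(volume.restrict (Set.Ioo a b)),
      Tendsto (fun y : ℝ => ((φ ∘ f) (Complex.ofReal x + y * Complex.I)).im) (𝓝[>] (0:ℝ)) (𝓝 0) := by
    rw [ae_restrict_iff' measurableSet_Ioo] at hae ⊢
    filter_upwards [hae] with x hx hxi
    obtain ⟨h1, h2⟩ := hMr x ⟨hxi, hx hxi⟩
    have hMx : M (L x) = (((L x - p) / (L x - q) : ℝ) : ℂ) := by
      simp [hM]
    have h3 : M (L x) ∈ slitPlane := by
      rw [hMx]
      exact Complex.ofReal_mem_slitPlane.2 h2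
    have h4 := ((hφd _ h1 h3).continuousAt.tendsto.comp (hLs x (hx hxi)))
    have h5 := (Complex.continuous_im.tendsto _).comp h4
    have h6 : (φ (L x)).im = 0 := by
      have : φ (L x) = ((( ((L x - p) / (L x - q)) ^ (1/2:ℝ) + 1)⁻¹ : ℝ) : ℂ) := by
        simp only [hφ, hMx]
        push_cast [Complex.ofReal_cpow h2.le]
        rfl
      rw [this, Complex.ofReal_im]
    rw [h6] at h5
    exact h5
  obtain ⟨r, h, hr, hhd, hheq⟩ := bounded_reflect (φ ∘ f) hc1 hc2 a b hc3 x₀ hx₀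
  set s : ℂ → ℂ := (fun z => (h z)⁻¹ - 1) with hs
  refine ⟨Metric.ball (x₀ : ℂ) r, fun z => (q * s z ^ 2 - p) / (s z ^ 2 - 1),
    Metric.isOpen_ball, Metric.mem_ball_self hr, ?_, ?_⟩
  · have hhm : MeromorphicOn h (Metric.ball (x₀ : ℂ) r) :=
      (hhd.analyticOnNhd Metric.isOpen_ball).meromorphicOn
    intro z hz
    have h1 := hhm z hz
    have h2 : MeromorphicAt s z := h1.inv.sub (MeromorphicAt.const 1 z)
    have h3 := h2.pow 2
    exact (((MeromorphicAt.const (q : ℂ) z).mul h3).sub (MeromorphicAt.const (p : ℂ) z)).div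
      (h3.sub (MeromorphicAt.const 1 z))
  · intro z hz
    obtain ⟨h1, h2⟩ := hMs _ (hfm hz.2)
    have h3 : s z = (M (f z)) ^ (1 / 2 : ℂ) := by
      simp only [hs]
      rw [← hheq hz]
      simp [hφ]
    have h4 : s z ^ 2 = M (f z) := by
      rw [h3, ← Complex.cpow_nat_mul]
      simp
    have h5 : M (f z) - 1 = (q - p) / (f z - q) := by
      simp only [hM]
      field_simp
      ring
    have h6 : (q : ℂ) - p ≠ 0 := by
      have : q - p ≠ 0 := by rw [hp, hq]; linarith
      exact_mod_cast this
    simp only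
    rw [h4, h5]
    simp only [hM]
    field_simp
    ring
end

section
/- Let μ be a Borel probability measure on ℝ and let μ^{sc} denote its singular continuous part, i.e. the singular part of μ with respect to Lebesgue measure, restricted to the complement of the set of atoms of μ. Then for μ^{sc}-almost every x ∈ ℝ, lim_{y↓0} Im G_μ(x+iy) = −∞. -/
open Complex Filter Set Topology MeasureTheory

/-- The Cauchy transform `G_μ(z) = ∫ dμ(t)/(z − t)` of a measure `μ` on `ℝ`. -/
noncomputable def cauchyT (μ : Measure ℝ) (z : ℂ) : ℂ :=
  ∫ t, (z - (t : ℂ))⁻¹ ∂μ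

lemma aux_integrable (μ : Measure ℝ) [IsProbabilityMeasure μ] (x y : ℝ) (hy : 0 < y) :
    Integrable (fun t : ℝ => ((Complex.ofReal x + y * Complex.I) - (t : ℂ))⁻¹) μ := by
  apply Integrable.of_bound (C := y⁻¹)
  · exact Measurable.aestronglyMeasurable (by fun_prop)
  · refine Eventually.of_forall fun t => ?_
    rw [norm_inv]
    have h := Complex.abs_im_le_norm ((Complex.ofReal x + y * Complex.I) - (t : ℂ))
    simp only [sub_im, add_im, ofReal_im, mul_im, ofReal_re, I_im, I_re, mul_one, mul_zero,
      add_zero, zero_add, sub_zero, abs_of_pos hy] at h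
    gcongr

lemma aux_bound (μ : Measure ℝ) [IsProbabilityMeasure μ] (x y : ℝ) (hy : 0 < y) :
    (cauchyT μ (Complex.ofReal x + y * Complex.I)).im
      ≤ - (μ.real (Metric.closedBall x y) / (2 * y)) := by
  have hI := aux_integrable μ x y hy
  have h1 : (cauchyT μ (Complex.ofReal x + y * Complex.I)).im
      = ∫ t, (((Complex.ofReal x + y * Complex.I) - (t : ℂ))⁻¹).im ∂μ := by
    unfold cauchyT
    exact (integral_im hI).symm
  have h2 : ∀ t : ℝ, (((Complex.ofReal x + y * Complex.I) - (t : ℂ))⁻¹).im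
      = - (y / ((x - t) ^ 2 + y ^ 2)) := by
    intro t
    rw [Complex.inv_im]
    simp [Complex.normSq_apply]
    ring
  have h3 : ∫ t, (Metric.closedBall x y).indicator (fun _ => -(1 / (2 * y))) t ∂μ
      = - (μ.real (Metric.closedBall x y) / (2 * y)) := by
    rw [integral_indicator_const _ Metric.isClosed_closedBall.measurableSet]
    simp only [smul_eq_mul]
    ring
  rw [h1, ← h3]
  apply integral_mono hI.im
  · exact (integrable_const _).indicator Metric.isClosed_closedBall.measurableSet
  · intro t
    change (((Complex.ofReal x + y * Complex.I) - (t : ℂ))⁻¹).im ≤ _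
    rw [h2]
    by_cases ht : t ∈ Metric.closedBall x y
    · rw [Set.indicator_of_mem ht, neg_le_neg_iff, div_le_div_iff₀ (by positivity) (by positivity)]
      rw [Metric.mem_closedBall, Real.dist_eq, abs_le] at ht
      nlinarith
    · rw [Set.indicator_of_notMem ht, neg_nonpos]
      positivity

/-- For a Borel probability measure `μ` on `ℝ`, at `μ^{sc}`-almost every `x ∈ ℝ`
(where `μ^{sc}` is the singular part of `μ` with respect to Lebesgue measure,
restricted to the complement of the atoms of `μ`), one has
`Im G_μ(x+iy) → −∞` as `y ↓ 0`. -/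
theorem singular_continuous_cauchy_blowup
    (μ : Measure ℝ) [IsProbabilityMeasure μ] :
    ∀ᵐ x ∂((μ.singularPart volume).restrict {x : ℝ | μ {x} = 0}),
      Tendsto (fun y : ℝ => (cauchyT μ (Complex.ofReal x + y * Complex.I)).im)
        (𝓝[>] (0:ℝ)) atBot := by
  apply ae_restrict_of_ae
  set σ := μ.singularPart volume with hσ
  have hle : σ ≤ μ := Measure.singularPart_le _ _
  have hz : volume.rnDeriv σ =ᵐ[σ] 0 :=
    (Measure.rnDeriv_eq_zero _ _).2 (Measure.mutuallySingular_singularPart μ volume).symm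
  filter_upwards [Besicovitch.ae_tendsto_rnDeriv (volume : Measure ℝ) σ, hz] with x hx hx0
  rw [hx0] at hx
  rw [tendsto_atBot]
  intro b
  set M : ℝ := max 1 (-b) with hM
  have hM1 : 0 < M := lt_of_lt_of_le one_pos (le_max_left _ _)
  have hlt : (0 : ENNReal) < ENNReal.ofReal (1 / M) := ENNReal.ofReal_pos.2 (by positivity)
  filter_upwards [hx.eventually_lt_const hlt, self_mem_nhdsWithin] with y hy hy0
  have hy0 : 0 < y := hy0
  refine (aux_bound μ x y hy0).trans ?_
  rw [Real.volume_closedBall] at hy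
  have hne : σ (Metric.closedBall x y) ≠ 0 := by
    intro h
    rw [h, ENNReal.div_zero (by simpa using hy0)] at hy
    exact not_top_lt hy
  have hy2 := (ENNReal.div_le_iff hne (measure_ne_top _ _)).1 hy.le
  have hy3 : ENNReal.ofReal (2 * y)
      ≤ ENNReal.ofReal (1 / M * μ.real (Metric.closedBall x y)) := by
    rw [ENNReal.ofReal_mul (p := 1 / M) (by positivity), ofReal_measureReal]
    exact hy2.trans (by gcongr)
  rw [ENNReal.ofReal_le_ofReal_iff (by positivity)] at hy3
  have h4 : M ≤ μ.real (Metric.closedBall x y) / (2 * y) := by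
    rw [le_div_iff₀ (by positivity)]
    calc M * (2 * y) ≤ M * (1 / M * μ.real (Metric.closedBall x y)) := by gcongr
      _ = _ := by field_simp
  have h5 : -b ≤ M := le_max_right _ _
  linarith
end
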